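/- For every integer n ≥ 2, the homogeneous Narayana polynomials satisfy N^B_n(x,y) = (x+y)·N^B_{n-1}(x,y) + 2·Σ_{k=0}^{n-2} N^B_k(x,y)·N^A_{n-k-1}(x,y). -/

import Mathlib

open MvPolynomial

/-- The homogeneous Narayana polynomial of type A (`X 0` is `x`, `X 1` is `y`). -/
noncomputable def narayanaA2 (n : ℕ) : MvPolynomial (Fin 2) ℚ :=
  if n = 0 then X 1
  else ∑ k ∈ Finset.Icc 1 n,
    C ((n.choose k * n.choose (k - 1) : ℚ) / n) * X 0 ^ k * X 1 ^ (n - k + 1)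

/-- The homogeneous Narayana polynomial of type B:
`N^B_n(x,y) = ∑_{k=0}^n C(n,k)² x^k y^{n-k}`. -/
noncomputable def narayanaB2 (n : ℕ) : MvPolynomial (Fin 2) ℚ :=
  ∑ k ∈ Finset.range (n + 1), C ((n.choose k : ℚ) ^ 2) * X 0 ^ k * X 1 ^ (n - k)

/-!
Put `s = x + y` and `p = x * y`. Pascal's rule, applied to coefficients, gives two linear
recurrences, `B (n + 1) = s * B n + 2 * n * A n` and
`(n + 2) * A (n + 1) = s * n * A n + 2 * p * B n`. For the generating functions
`G = ∑ B n * t ^ n` and `𝒜 = ∑_{n ≥ 1} A n * t ^ n` they become linear differential equations, and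
eliminating `𝒜'` from these yields `F = D * G` and `2 * F' = D' * G`, where
`F = 1 - t * (s + 2 * 𝒜)` and `D = (1 - s * t) ^ 2 - 4 * p * t ^ 2`. Hence `(G * F)' = 0`, so
`G * F = 1`: this is the convolution identity.
-/

open Finset
open scoped PowerSeries

section Derivation

variable {k R : Type*} [CommSemiring k] [CommRing R] [Algebra k R] (δ : Derivation k R R)

/-- Applies to `F = √D` and `G = 1 / √D`, through linear relations that avoid the square root. -/
theorem derivation_mul_eq_zero_of_sqrt {D F G : R}
    (hF : F = D * G) (hδF : 2 * δ F = δ D * G) : δ (G * F) = 0 := by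
  have hδ : δ F = D * δ G + G * δ D := by rw [hF, δ.leibniz, smul_eq_mul, smul_eq_mul]
  rw [δ.leibniz, smul_eq_mul, smul_eq_mul]
  linear_combination G * hδF + δ G * hF - G * hδ

theorem derivation_mul_one_sub_eq_zero {s p t A G : R} (hs : δ s = 0) (hp : δ p = 0)
    (ht : δ t = 1) (hG : G = 1 + t * (s * G + 2 * (t * δ A)))
    (hA : δ (t * A) = t * (s * (t * δ A) + 2 * (p * G))) :
    δ (G * (1 - t * (s + 2 * A))) = 0 := by
  have h2 : δ 2 = 0 := δ.map_natCast 2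
  have h4 : δ 4 = 0 := δ.map_natCast 4
  have htA : δ (t * A) = t * δ A + A := by simp [ht]
  have hF : 1 - t * (s + 2 * A) = ((1 - s * t) ^ 2 - 4 * p * t ^ 2) * G := by
    linear_combination (s * t - 1) * hG + 2 * t * htA - 2 * t * hA
  have hδF : δ (1 - t * (s + 2 * A)) = -s - 2 * δ (t * A) := by
    simp only [map_sub, map_add, δ.leibniz, δ.map_one_eq_zero, hs, ht, h2, smul_eq_mul]
    ring
  have hδD : δ ((1 - s * t) ^ 2 - 4 * p * t ^ 2) = -2 * s * (1 - s * t) - 8 * p * t := by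
    simp only [map_sub, δ.leibniz, δ.leibniz_pow, δ.map_one_eq_zero, hs, hp, ht, h4, smul_eq_mul,
      nsmul_eq_mul]
    push_cast
    ring
  refine derivation_mul_eq_zero_of_sqrt δ hF ?_
  linear_combination 2 * hδF - G * hδD - 4 * hA + 2 * s * hG

end Derivation

section PowerSeries

variable {R : Type*} [CommRing R]

theorem coeff_X_mul_derivative (f : R⟦X⟧) (n : ℕ) :
    PowerSeries.coeff n (PowerSeries.X * d⁄dX R f) = n * PowerSeries.coeff n f := by
  cases n <;> simp [PowerSeries.coeff_derivative, mul_comm]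

variable [IsAddTorsionFree R] {s p : R}

theorem mul_one_sub_eq_one_of_derivative_eq {A G : R⟦X⟧}
    (hG : G = 1 + PowerSeries.X * (PowerSeries.C s * G + 2 * (PowerSeries.X * d⁄dX R A)))
    (hA : d⁄dX R (PowerSeries.X * A) = PowerSeries.X *
      (PowerSeries.C s * (PowerSeries.X * d⁄dX R A) + 2 * (PowerSeries.C p * G))) :
    G * (1 - PowerSeries.X * (PowerSeries.C s + 2 * A)) = 1 := by
  refine PowerSeries.derivative.ext ?_ ?_
  · rw [PowerSeries.derivative_one]
    exact derivation_mul_one_sub_eq_zero _ PowerSeries.derivative_C PowerSeries.derivative_C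
      PowerSeries.derivative_X hG hA
  · simpa using congrArg PowerSeries.constantCoeff hG

theorem eq_mul_add_two_mul_convolution {a b : ℕ → R} (hb₀ : b 0 = 1)
    (hb : ∀ n, b (n + 1) = s * b n + 2 * (n * a n))
    (ha : ∀ n, (n + 2) * a (n + 1) = s * (n * a n) + 2 * (p * b n)) (n : ℕ) :
    b (n + 1) = s * b n + 2 * ∑ k ∈ range n, b k * a (n - k) := by
  let G : R⟦X⟧ := PowerSeries.mk b
  -- `a 0` enters both recurrences only through `0 * a 0`, so `A` may leave it out.
  let A : R⟦X⟧ := PowerSeries.mk fun n => if n = 0 then 0 else a n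
  have hcoeff (n : ℕ) : PowerSeries.coeff n (PowerSeries.X * d⁄dX R A) = n * a n := by
    cases n <;> simp [coeff_X_mul_derivative, A, -PowerSeries.coeff_succ_X_mul]
  have hG : G = 1 + PowerSeries.X * (PowerSeries.C s * G + 2 * (PowerSeries.X * d⁄dX R A)) := by
    ext (_ | n)
    · simp [G, hb₀]
    · simp [PowerSeries.coeff_one, two_mul, G, hb, hcoeff]
  have hA : d⁄dX R (PowerSeries.X * A) = PowerSeries.X *
      (PowerSeries.C s * (PowerSeries.X * d⁄dX R A) + 2 * (PowerSeries.C p * G)) := by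
    ext (_ | n)
    · simp [A]
    · suffices a (n + 1) * (n + 1 + 1) = s * (n * a n) + (p * b n + p * b n) by
        simpa [-Derivation.leibniz, PowerSeries.coeff_derivative, two_mul, hcoeff, A, G]
      linear_combination ha n
  have hconv : PowerSeries.coeff n (G * A) = ∑ k ∈ range n, b k * a (n - k) := by
    rw [PowerSeries.coeff_mul, Nat.sum_antidiagonal_eq_sum_range_succ_mk, sum_range_succ]
    simp only [G, A, PowerSeries.coeff_mk, Nat.sub_self, if_true, mul_zero, add_zero]
    exact sum_congr rfl fun k hk => by rw [if_neg (Nat.sub_ne_zero_of_lt (mem_range.1 hk))]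
  calc b (n + 1) = PowerSeries.coeff (n + 1) G := by rw [PowerSeries.coeff_mk]
    _ = PowerSeries.coeff (n + 1) (1 + PowerSeries.X * (PowerSeries.C s * G + 2 * (G * A))) := by
      congr 1
      linear_combination mul_one_sub_eq_one_of_derivative_eq hG hA
    _ = s * b n + 2 * ∑ k ∈ range n, b k * a (n - k) := by
      simp [PowerSeries.coeff_one, two_mul, hconv, G]

end PowerSeries

section BinaryForm

variable {R : Type*} [CommSemiring R] (x y : R)

/-- The binary form `∑_{k ≤ n} f k * x ^ k * y ^ (n - k)` of degree `n`, as a linear function of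
its coefficients: recurrences of Narayana polynomials reduce to identities between coefficients. -/
def binaryForm (n : ℕ) : (ℕ → R) →ₗ[R] R :=
  ∑ k ∈ range (n + 1), (x ^ k * y ^ (n - k)) • LinearMap.proj k

theorem binaryForm_apply (n : ℕ) (f : ℕ → R) :
    binaryForm x y n f = ∑ k ∈ range (n + 1), f k * x ^ k * y ^ (n - k) := by
  simp only [binaryForm, LinearMap.sum_apply, LinearMap.smul_apply, LinearMap.proj_apply,
    smul_eq_mul]
  exact sum_congr rfl fun k _ => by ring

theorem right_mul_binaryForm (n : ℕ) {f : ℕ → R} (hf : f (n + 1) = 0) :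
    y * binaryForm x y n f = binaryForm x y (n + 1) f := by
  rw [binaryForm_apply, binaryForm_apply, sum_range_succ _ (n + 1), hf, zero_mul, zero_mul,
    add_zero, mul_sum]
  refine sum_congr rfl fun k hk => ?_
  rw [Nat.sub_add_comm (mem_range_succ_iff.1 hk)]
  ring

theorem binaryForm_succ (n : ℕ) {f g h : ℕ → R} (h_zero : h 0 = g 0)
    (h_succ : ∀ k, h (k + 1) = f k + g (k + 1)) (g_last : g (n + 1) = 0) :
    binaryForm x y (n + 1) h = x * binaryForm x y n f + y * binaryForm x y n g := by
  rw [right_mul_binaryForm x y n g_last]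
  simp only [binaryForm_apply, sum_range_succ' _ (n + 1), h_zero, h_succ, mul_sum, ← add_assoc,
    ← sum_add_distrib, Nat.add_sub_add_right]
  congr 1
  exact sum_congr rfl fun k _ => by ring

theorem binaryForm_succ_choose_sq (n : ℕ) :
    binaryForm x y (n + 1) (fun k => ((n + 1).choose k : R) ^ 2) =
      (x + y) * binaryForm x y n (fun k => (n.choose k : R) ^ 2) +
        2 * (x * binaryForm x y n fun k => (n.choose k * n.choose (k + 1) : R)) := by
  rw [binaryForm_succ x y n
    (f := (fun k => (n.choose k : R) ^ 2) +
      (2 : R) • fun k => (n.choose k * n.choose (k + 1) : R))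
    (g := fun k => (n.choose k : R) ^ 2)]
  · simp only [map_add, map_smul, smul_eq_mul]
    ring
  · simp
  · intro k
    simp only [Nat.choose_succ_succ', Nat.cast_add, Pi.add_apply, Pi.smul_apply, smul_eq_mul]
    ring
  · simp

theorem add_two_mul_choose_mul_choose_succ (n k : ℕ) :
    (n + 2) * ((n + 1).choose k * (n + 1).choose (k + 1)) =
      (n + 1) * (n.choose k * (n + 2).choose (k + 1)) := by
  have h₁ := Nat.add_one_mul_choose_eq n k
  have h₂ := Nat.add_one_mul_choose_eq (n + 1) k
  linear_combination (n + 1).choose (k + 1) * h₂ + (n + 2).choose (k + 1) * h₁.symm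

theorem binaryForm_succ_choose_mul_choose (n : ℕ) :
    (n + 2) * binaryForm x y (n + 1) (fun k => ((n + 1).choose k * (n + 1).choose (k + 1) : R)) =
      (n + 1) * ((x + y) * binaryForm x y n (fun k => (n.choose k * n.choose (k + 1) : R)) +
        2 * (y * binaryForm x y n fun k => (n.choose k : R) ^ 2)) := by
  let f : ℕ → R := fun k => n.choose k * n.choose (k + 1)
  let g : ℕ → R := f + (2 : R) • fun k => (n.choose k : R) ^ 2
  rw [← smul_eq_mul, ← map_smul,
    binaryForm_succ x y n (f := (n + 1 : R) • f) (g := (n + 1 : R) • g)]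
  · simp only [g, map_add, map_smul, smul_eq_mul]
    ring
  · simp only [f, g, Pi.add_apply, Pi.smul_apply, smul_eq_mul, Nat.choose_zero_right, zero_add,
      Nat.choose_one_right]
    push_cast
    ring
  · intro k
    have hPascal : (n + 2).choose (k + 2) =
        n.choose k + 2 * n.choose (k + 1) + n.choose (k + 2) := by
      simp only [Nat.choose_succ_succ']
      ring
    have hcoeff := congrArg (Nat.cast : ℕ → R) (add_two_mul_choose_mul_choose_succ n (k + 1))
    rw [hPascal] at hcoeff
    push_cast at hcoeff
    simp only [f, g, Pi.add_apply, Pi.smul_apply, smul_eq_mul]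
    rw [hcoeff]
    ring
  · simp [f, g]

end BinaryForm

theorem narayanaB2_eq_binaryForm (n : ℕ) :
    narayanaB2 n = binaryForm (X 0) (X 1) n fun k => (n.choose k : MvPolynomial (Fin 2) ℚ) ^ 2 := by
  simp [narayanaB2, binaryForm_apply]

theorem natCast_mul_narayanaA2 (n : ℕ) :
    (n : MvPolynomial (Fin 2) ℚ) * narayanaA2 n = X 0 * binaryForm (X 0) (X 1) n
      fun k => (n.choose k * n.choose (k + 1) : MvPolynomial (Fin 2) ℚ) := by
  rcases eq_or_ne n 0 with rfl | hn
  · simp [binaryForm_apply]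
  have hIcc : Icc 1 n = Ico (0 + 1) (n + 1) := rfl
  rw [narayanaA2, if_neg hn, binaryForm_apply, sum_range_succ, hIcc, ← sum_Ico_add', ← range_eq_Ico,
    Nat.choose_succ_self, Nat.cast_zero, mul_zero, zero_mul, zero_mul, add_zero, mul_sum, mul_sum]
  refine sum_congr rfl fun k hk => ?_
  have hexp : n - (k + 1) + 1 = n - k := by have := mem_range.1 hk; omega
  have hcoeff : (n : MvPolynomial (Fin 2) ℚ) * C (n.choose (k + 1) * n.choose k / n : ℚ) =
      (n.choose k * n.choose (k + 1) : MvPolynomial (Fin 2) ℚ) := by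
    simp only [← map_natCast (C (σ := Fin 2) (R := ℚ)), ← C_mul]
    congr 1
    field_simp
  rw [hexp, Nat.add_sub_cancel]
  linear_combination X 0 ^ (k + 1) * X 1 ^ (n - k) * hcoeff

theorem narayanaB2_zero : narayanaB2 0 = 1 := by simp [narayanaB2]

theorem narayanaB2_succ (n : ℕ) :
    narayanaB2 (n + 1) =
      (X 0 + X 1) * narayanaB2 n + 2 * ((n : MvPolynomial (Fin 2) ℚ) * narayanaA2 n) := by
  rw [natCast_mul_narayanaA2, narayanaB2_eq_binaryForm, narayanaB2_eq_binaryForm,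
    binaryForm_succ_choose_sq]

theorem narayanaA2_succ (n : ℕ) :
    (n + 2 : MvPolynomial (Fin 2) ℚ) * narayanaA2 (n + 1) =
      (X 0 + X 1) * ((n : MvPolynomial (Fin 2) ℚ) * narayanaA2 n) +
        2 * (X 0 * X 1 * narayanaB2 n) := by
  have hA := natCast_mul_narayanaA2 (n + 1)
  have hrec := binaryForm_succ_choose_mul_choose (X 0 : MvPolynomial (Fin 2) ℚ) (X 1) n
  rw [Nat.cast_add_one] at hA
  refine mul_left_cancel₀ (Nat.cast_add_one_ne_zero n) ?_
  rw [natCast_mul_narayanaA2, narayanaB2_eq_binaryForm]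
  linear_combination (n + 2 : MvPolynomial (Fin 2) ℚ) * hA + X 0 * hrec

theorem narayanaB_convolution (n : ℕ) (hn : 2 ≤ n) :
    narayanaB2 n =
      (X 0 + X 1) * narayanaB2 (n - 1) +
        2 * ∑ k ∈ Finset.range (n - 1), narayanaB2 k * narayanaA2 (n - k - 1) := by
  obtain ⟨m, rfl⟩ := Nat.exists_eq_add_of_le' (one_le_two.trans hn)
  simpa only [Nat.sub_right_comm _ _ 1, Nat.add_sub_cancel] using
    eq_mul_add_two_mul_convolution narayanaB2_zero narayanaB2_succ narayanaA2_succ m
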